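/- Let r ≥ 1 be an integer and let G be a finite simple graph. If rankwidth(G) ≥ 72r, then G contains an induced subgraph H with min-bal-cutrank(H) ≥ r. -/

import Mathlib

open Classical

/-- The cutrank of a pair of vertex sets `X`, `Y` in a graph `G`:
the rank over `𝔽₂` of the `X × Y` biadjacency matrix. -/
noncomputable def cutrank {V : Type*} (G : SimpleGraph V) (X Y : Finset V) : ℕ :=
  Matrix.rank (Matrix.of fun (x : X) (y : Y) => if G.Adj x.1 y.1 then (1 : ZMod 2) else 0)

/-- `(X, Y)` is a balanced partition of the vertex set `S`:
`X ⊔ Y = S` and both parts have size at most `(2/3)|S|`. -/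
def IsBalancedPartitionOf {V : Type*} (S X Y : Finset V) : Prop :=
  X ∪ Y = S ∧ Disjoint X Y ∧ 3 * X.card ≤ 2 * S.card ∧ 3 * Y.card ≤ 2 * S.card

/-- The minimum balanced cutrank of the induced subgraph `G[S]`:
the minimum of `cutrank G X Y` over balanced partitions `(X, Y)` of `S`.
(For `X, Y ⊆ S`, the biadjacency matrix in `G[S]` coincides with that in `G`.) -/
noncomputable def minBalCutrank {V : Type*} (G : SimpleGraph V) (S : Finset V) : ℕ :=
  sInf {k | ∃ X Y : Finset V, IsBalancedPartitionOf S X Y ∧ cutrank G X Y = k}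

/-- A rank-decomposition of a graph on vertex type `V`: a subcubic tree
together with a bijection from `V` to the leaves (degree-1 vertices) of the tree. -/
structure RankDecomp (V : Type*) [Fintype V] where
  n : ℕ
  tree : SimpleGraph (Fin n)
  isTree : tree.IsTree
  subcubic : ∀ t : Fin n, tree.degree t ≤ 3
  leaf : V → Fin n
  leafDeg : ∀ v : V, tree.degree (leaf v) = 1
  leafInj : Function.Injective leaf
  leafSurj : ∀ t : Fin n, tree.degree t = 1 → ∃ v : V, leaf v = t

/-- The side of the edge `{u, v}` of the decomposition tree containing `u`:
all vertices of `G` whose leaf lies in the component of `u` after deleting the edge. -/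
noncomputable def RankDecomp.side {V : Type*} [Fintype V] (d : RankDecomp V) (u v : Fin d.n) :
    Finset V :=
  Finset.univ.filter fun x => (d.tree.deleteEdges {s(u, v)}).Reachable (d.leaf x) u

/-- The decomposition `d` has width at most `k` for the graph `G`: every edge of the
tree induces a partition of the vertices of cutrank at most `k`. -/
def RankDecomp.widthLE {V : Type*} [Fintype V] (G : SimpleGraph V) (d : RankDecomp V) (k : ℕ) :
    Prop :=
  ∀ u v : Fin d.n, d.tree.Adj u v → cutrank G (d.side u v) (d.side v u) ≤ k

/-- The rankwidth of `G`: the minimum width of a rank-decomposition of `G`. -/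
noncomputable def rankwidth {V : Type*} [Fintype V] (G : SimpleGraph V) : ℕ :=
  sInf {k | ∃ d : RankDecomp V, RankDecomp.widthLE G d k}


section CutrankBasics

variable {V : Type*}

theorem cr_symm (G : SimpleGraph V) (X Y : Finset V) : cutrank G X Y = cutrank G Y X := by
  unfold cutrank
  rw [← Matrix.rank_transpose]
  congr 1
  ext i j
  simp [Matrix.transpose_apply, G.adj_comm]

/-- the row of a vertex -/
noncomputable def crRow (G : SimpleGraph V) (x : V) : V → ZMod 2 :=
  fun y => if G.Adj x y then 1 else 0

/-- restriction to a set of coordinates -/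
def crRestr (Y : Finset V) : (V → ZMod 2) →ₗ[ZMod 2] (Y → ZMod 2) :=
  LinearMap.funLeft (ZMod 2) (ZMod 2) (fun y : Y => (y : V))

/-- row space plus the kernel of the restriction -/
noncomputable def crSpace (G : SimpleGraph V) (X Y : Finset V) : Submodule (ZMod 2) (V → ZMod 2) :=
  Submodule.span (ZMod 2) (crRow G '' (X : Set V)) ⊔ LinearMap.ker (crRestr Y)

theorem crRestr_surj (Y : Finset V) : Function.Surjective (crRestr Y) :=
  LinearMap.funLeft_surjective_of_injective _ _ _ Subtype.val_injective

theorem cr_ker_card [Fintype V] (Y : Finset V) :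
    Module.finrank (ZMod 2) (LinearMap.ker (crRestr Y)) + Y.card = Fintype.card V := by
  have h := LinearMap.finrank_range_add_finrank_ker (crRestr Y)
  rw [LinearMap.range_eq_top.2 (crRestr_surj Y)] at h
  simp at h
  omega

theorem cr_eq_map [Fintype V] (G : SimpleGraph V) (X Y : Finset V) :
    cutrank G X Y = Module.finrank (ZMod 2) ((crSpace G X Y).map (crRestr Y)) := by
  unfold cutrank crSpace
  rw [Matrix.rank_eq_finrank_span_row, Submodule.map_sup, Submodule.map_span]
  have h1 : Submodule.map (crRestr Y) (LinearMap.ker (crRestr Y)) = ⊥ := by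
    rw [Submodule.eq_bot_iff]
    rintro _ ⟨u, hu, rfl⟩
    exact hu
  rw [h1, sup_bot_eq]
  have : Set.range (Matrix.of fun (x : X) (y : Y) => if G.Adj x.1 y.1 then (1 : ZMod 2) else 0).row
      = crRestr Y '' (crRow G '' (X : Set V)) := by
    ext u
    constructor
    · rintro ⟨x, rfl⟩
      exact ⟨_, ⟨x.1, x.2, rfl⟩, rfl⟩
    · rintro ⟨_, ⟨x, hx, rfl⟩, rfl⟩
      exact ⟨⟨x, hx⟩, rfl⟩
  rw [this]

theorem cr_space [Fintype V] (G : SimpleGraph V) (X Y : Finset V) :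
    cutrank G X Y + Module.finrank (ZMod 2) (LinearMap.ker (crRestr Y)) =
      Module.finrank (ZMod 2) (crSpace G X Y) := by
  rw [cr_eq_map]
  have h := LinearMap.finrank_range_add_finrank_ker ((crRestr Y).domRestrict (crSpace G X Y))
  rw [LinearMap.range_domRestrict] at h
  rw [← h, LinearMap.ker_domRestrict]
  congr 1
  have hle : LinearMap.ker (crRestr Y) ≤ crSpace G X Y := le_sup_right
  exact (LinearEquiv.finrank_eq (Submodule.comapSubtypeEquivOfLe hle)).symm

theorem cr_submod [Fintype V] (G : SimpleGraph V) (X₁ Y₁ X₂ Y₂ : Finset V) :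
    cutrank G (X₁ ∩ X₂) (Y₁ ∪ Y₂) + cutrank G (X₁ ∪ X₂) (Y₁ ∩ Y₂) ≤
      cutrank G X₁ Y₁ + cutrank G X₂ Y₂ := by
  have key := Submodule.finrank_sup_add_finrank_inf_eq (crSpace G X₁ Y₁) (crSpace G X₂ Y₂)
  have hk : ∀ Y Y' : Finset V, Y ⊆ Y' →
      LinearMap.ker (crRestr Y') ≤ LinearMap.ker (crRestr Y) := by
    intro Y Y' h u hu
    rw [LinearMap.mem_ker] at hu ⊢
    ext y
    exact congrFun hu ⟨y.1, h y.2⟩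
  have hmono : ∀ X X' Y Y' : Finset V, X ⊆ X' → Y' ⊆ Y → crSpace G X Y ≤ crSpace G X' Y' := by
    intro X X' Y Y' h1 h2
    exact sup_le_sup (Submodule.span_mono (Set.image_mono (by exact_mod_cast h1))) (hk _ _ h2)
  have h1 : crSpace G (X₁ ∩ X₂) (Y₁ ∪ Y₂) ≤ crSpace G X₁ Y₁ ⊓ crSpace G X₂ Y₂ :=
    le_inf (hmono _ _ _ _ Finset.inter_subset_left Finset.subset_union_left)
      (hmono _ _ _ _ Finset.inter_subset_right Finset.subset_union_right)
  have h2 : crSpace G (X₁ ∪ X₂) (Y₁ ∩ Y₂) ≤ crSpace G X₁ Y₁ ⊔ crSpace G X₂ Y₂ := by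
    refine sup_le ?_ ?_
    · rw [Submodule.span_le]
      rintro _ ⟨x, hx, rfl⟩
      rw [Finset.mem_coe, Finset.mem_union] at hx
      rcases hx with hx | hx
      · exact Submodule.mem_sup_left (Submodule.mem_sup_left (Submodule.subset_span ⟨x, hx, rfl⟩))
      · exact Submodule.mem_sup_right (Submodule.mem_sup_left (Submodule.subset_span ⟨x, hx, rfl⟩))
    · intro u hu
      rw [LinearMap.mem_ker] at hu
      have hu' : ∀ y, y ∈ Y₁ → y ∈ Y₂ → u y = 0 := fun y h1 h2 =>
        congrFun hu ⟨y, Finset.mem_inter.2 ⟨h1, h2⟩⟩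
      have : u = (fun y => if y ∈ Y₁ then 0 else u y) + (fun y => if y ∈ Y₁ then u y else 0) := by
        ext y; by_cases h : y ∈ Y₁ <;> simp [h]
      rw [this]
      refine Submodule.add_mem_sup (Submodule.mem_sup_right ?_) (Submodule.mem_sup_right ?_)
      · rw [LinearMap.mem_ker]; ext y
        show (if (y : V) ∈ Y₁ then (0 : ZMod 2) else u y) = 0
        simp
      · rw [LinearMap.mem_ker]; ext y
        show (if (y : V) ∈ Y₁ then u y else (0 : ZMod 2)) = 0
        by_cases h : (y : V) ∈ Y₁
        · simp [h, hu' _ h y.2]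
        · simp [h]
  have d1 := Submodule.finrank_mono h1
  have d2 := Submodule.finrank_mono h2
  rw [← cr_space] at d1 d2
  rw [← cr_space, ← cr_space] at key
  have k1 := cr_ker_card Y₁
  have k2 := cr_ker_card Y₂
  have k3 := cr_ker_card (Y₁ ∪ Y₂)
  have k4 := cr_ker_card (Y₁ ∩ Y₂)
  have k5 := Finset.card_union_add_card_inter Y₁ Y₂
  omega

theorem cr_card (G : SimpleGraph V) (X Y : Finset V) : cutrank G X Y ≤ X.card := by
  unfold cutrank
  exact (Matrix.rank_le_card_height _).trans (by simp)

theorem cr_mono_left [Fintype V] (G : SimpleGraph V) {X X' Y : Finset V} (h : X ⊆ X') :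
    cutrank G X Y ≤ cutrank G X' Y := by
  have := Submodule.finrank_mono (show crSpace G X Y ≤ crSpace G X' Y from
    sup_le_sup (Submodule.span_mono (Set.image_mono (by exact_mod_cast h))) le_rfl)
  rw [← cr_space, ← cr_space] at this
  omega

theorem cr_mono [Fintype V] (G : SimpleGraph V) {X X' Y Y' : Finset V} (h : X ⊆ X') (h' : Y ⊆ Y') :
    cutrank G X Y ≤ cutrank G X' Y' := by
  refine (cr_mono_left G h).trans ?_
  rw [cr_symm, cr_symm G X']
  exact cr_mono_left G h'

theorem cr_union_left [Fintype V] (G : SimpleGraph V) (X X' Y : Finset V) :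
    cutrank G (X ∪ X') Y ≤ cutrank G X Y + cutrank G X' Y := by
  have := cr_submod G X Y X' Y
  rw [Finset.union_self, Finset.inter_self] at this
  omega

theorem cr_union_right [Fintype V] (G : SimpleGraph V) (X Y Y' : Finset V) :
    cutrank G X (Y ∪ Y') ≤ cutrank G X Y + cutrank G X Y' := by
  rw [cr_symm, cr_symm G X, cr_symm G X]
  exact cr_union_left G _ _ _

theorem cr_tri [Fintype V] (G : SimpleGraph V) (X X' Y Y' : Finset V) :
    cutrank G X Y + cutrank G X' Y' ≤ cutrank G (X ∪ X') (Y ∪ Y') + cutrank G X Y' := by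
  have := cr_submod G (X ∪ X') (Y ∪ Y') X Y'
  have h1 : cutrank G X Y ≤ cutrank G ((X ∪ X') ∩ X) ((Y ∪ Y') ∪ Y') :=
    cr_mono G (by grind) (by grind)
  have h2 : cutrank G X' Y' ≤ cutrank G ((X ∪ X') ∪ X) ((Y ∪ Y') ∩ Y') :=
    cr_mono G (by grind) (by grind)
  omega

/-- closure: if no single vertex of `A` raises the rank over `T`, neither does `A`. -/
theorem cr_closure [Fintype V] (G : SimpleGraph V) (T A Y : Finset V)
    (h : ∀ v ∈ A, cutrank G (insert v T) Y ≤ cutrank G T Y) :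
    cutrank G (T ∪ A) Y ≤ cutrank G T Y := by
  induction A using Finset.induction_on with
  | empty => simp
  | insert a A ha ih =>
    have ih' := ih (fun v hv => h v (Finset.mem_insert_of_mem hv))
    have h1 := h a (Finset.mem_insert_self _ _)
    have h2 := cr_submod G (T ∪ A) Y (insert a T) Y
    rw [Finset.union_self, Finset.inter_self] at h2
    have h3 : cutrank G T Y ≤ cutrank G ((T ∪ A) ∩ insert a T) Y :=
      cr_mono_left G (by grind)
    have h4 : T ∪ insert a A = (T ∪ A) ∪ insert a T := by grind
    rw [h4]
    omega

theorem cr_basis [Fintype V] (G : SimpleGraph V) (A Y : Finset V) :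
    ∃ Z ⊆ A, cutrank G Z Y = Z.card ∧ cutrank G Z Y = cutrank G A Y := by
  obtain ⟨Z, hZ, hmax⟩ := Finset.exists_max_image
    (A.powerset.filter fun Z => cutrank G Z Y = Z.card) Finset.card
    ⟨∅, by simp; exact Nat.le_zero.1 (by simpa using cr_card G ∅ Y)⟩
  simp only [Finset.mem_filter, Finset.mem_powerset] at hZ hmax
  refine ⟨Z, hZ.1, hZ.2, le_antisymm (cr_mono_left G hZ.1) ?_⟩
  have := cr_closure G Z A Y ?_
  · exact (cr_mono_left G Finset.subset_union_right).trans this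
  · intro v hv
    by_cases hvZ : v ∈ Z
    · rw [Finset.insert_eq_of_mem hvZ]
    by_contra hlt
    have h1 : cutrank G (insert v Z) Y ≤ (insert v Z).card := cr_card _ _ _
    have h2 := Finset.card_insert_of_notMem hvZ
    have := hmax (insert v Z) ⟨Finset.insert_subset hv hZ.1, by omega⟩
    omega

end CutrankBasics

section Core

variable {V : Type*} [Fintype V]

theorem core_split (G : SimpleGraph V) (r : ℕ) (W : Finset V) (hWc : 57 * r ≤ W.card)
    (hW : ∀ Z : Finset V, (W ∩ Z).card ≤ cutrank G Z Zᶜ ∨ (W \ Z).card ≤ cutrank G Z Zᶜ)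
    (B C D : Finset V) (hB : (W \ B).card < 19 * r) (hf : cutrank G B Bᶜ ≤ 18 * r)
    (hCD : C ∪ D = B) (hdis : Disjoint C D) (hc : cutrank G C D < r) :
    ((W \ C).card < 19 * r ∧ cutrank G C Cᶜ < cutrank G B Bᶜ + r) ∨
    ((W \ D).card < 19 * r ∧ cutrank G D Dᶜ < cutrank G B Bᶜ + r) := by
  have hfC : cutrank G C Cᶜ < cutrank G B Bᶜ + r := by
    have e : Cᶜ = D ∪ Bᶜ := by
      have := Finset.disjoint_left.1 hdis
      ext x; simp only [Finset.mem_compl, Finset.mem_union, ← hCD]; grind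
    have h1 := cr_union_right G C D Bᶜ
    have h2 : cutrank G C Bᶜ ≤ cutrank G B Bᶜ := cr_mono_left G (by grind)
    rw [e]; omega
  have hfD : cutrank G D Dᶜ < cutrank G B Bᶜ + r := by
    have e : Dᶜ = C ∪ Bᶜ := by
      have := Finset.disjoint_left.1 hdis
      ext x; simp only [Finset.mem_compl, Finset.mem_union, ← hCD]; grind
    have h1 := cr_union_right G D C Bᶜ
    rw [cr_symm G D C] at h1
    have h2 : cutrank G D Bᶜ ≤ cutrank G B Bᶜ := cr_mono_left G (by grind)
    rw [e]; omega
  by_contra hcon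
  rw [not_or, not_and, not_and] at hcon
  have hC : ¬ (W \ C).card < 19 * r := fun h => hcon.1 h hfC
  have hD : ¬ (W \ D).card < 19 * r := fun h => hcon.2 h hfD
  have hC' := hW C
  have hD' := hW D
  have hsub : W ⊆ (W ∩ C) ∪ (W ∩ D) ∪ (W \ B) := by
    intro x hx; rw [← hCD]; grind
  have h1 := Finset.card_le_card hsub
  have h2 := Finset.card_union_le ((W ∩ C) ∪ (W ∩ D)) (W \ B)
  have h3 := Finset.card_union_le (W ∩ C) (W ∩ D)
  omega

theorem core_step (G : SimpleGraph V) (r : ℕ) (hr : 1 ≤ r) (W : Finset V) (hWc : 57 * r ≤ W.card)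
    (hW : ∀ Z : Finset V, (W ∩ Z).card ≤ cutrank G Z Zᶜ ∨ (W \ Z).card ≤ cutrank G Z Zᶜ)
    (hbal : ∀ S : Finset V, 2 ≤ S.card → ∃ X Y, IsBalancedPartitionOf S X Y ∧ cutrank G X Y < r)
    (t : ℕ) (ht : t ≤ 18 * r)
    (B : Finset V) (hB : (W \ B).card < 19 * r) (hf : cutrank G B Bᶜ ≤ t) :
    ∃ B' : Finset V, (W \ B').card < 19 * r ∧ cutrank G B' B'ᶜ ≤ t + r ∧
      3 * B'.card ≤ 2 * B.card := by
  have hB2 : 2 ≤ B.card := by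
    have := Finset.card_le_card (show W ⊆ B ∪ (W \ B) by clear * -; grind)
    have := Finset.card_union_le B (W \ B)
    omega
  obtain ⟨X, Y, ⟨hu, hd, hX, hY⟩, hc⟩ := hbal B hB2
  rcases core_split G r W hWc hW B X Y hB (by omega) hu hd hc with ⟨h1, h2⟩ | ⟨h1, h2⟩
  · exact ⟨X, h1, by omega, hX⟩
  · exact ⟨Y, h1, by omega, hY⟩

/-- the set `Z` hung onto `B`: every part of `Z` has proportional rank to the rest -/
def HangsOn (G : SimpleGraph V) (p : ℕ) (B Z : Finset V) : Prop :=
  ∀ X ⊆ Z, X.card ≤ p * cutrank G X ((B ∪ Z) \ X)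

theorem core_grow (G : SimpleGraph V) (B : Finset V) (p s : ℕ) (hp : 1 ≤ p)
    (hs : ∀ B' : Finset V, B ⊆ B' → cutrank G B' B'ᶜ ≤ s → B.card + p * s < B'.card) :
    ∃ Z ⊆ Bᶜ, HangsOn G p B Z ∧ p * s < Z.card ∧ cutrank G Z B = cutrank G Bᶜ B := by
  obtain ⟨Z₀, hZ₀, hc₀, hr₀⟩ := cr_basis G Bᶜ B
  have hgood₀ : HangsOn G p B Z₀ := by
    intro X hX
    have h1 := cr_union_left G X (Z₀ \ X) B
    rw [Finset.union_sdiff_of_subset hX] at h1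
    have h2 := cr_card G (Z₀ \ X) B
    rw [Finset.card_sdiff_of_subset hX] at h2
    have h3 := Finset.card_le_card hX
    have h4 : cutrank G X B ≤ cutrank G X ((B ∪ Z₀) \ X) := cr_mono G subset_rfl (by
      intro b hb
      have : b ∉ X := fun h => by have := hZ₀ (hX h); simp at this; exact this hb
      grind)
    calc X.card ≤ 1 * cutrank G X ((B ∪ Z₀) \ X) := by omega
      _ ≤ _ := Nat.mul_le_mul_right _ hp
  obtain ⟨Z, hZ, hmax⟩ := Finset.exists_max_image
    (Bᶜ.powerset.filter fun Z => Z₀ ⊆ Z ∧ HangsOn G p B Z) Finset.card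
    ⟨Z₀, by simp only [Finset.mem_filter, Finset.mem_powerset]; exact ⟨hZ₀, subset_rfl, hgood₀⟩⟩
  simp only [Finset.mem_filter, Finset.mem_powerset] at hZ hmax
  obtain ⟨hZB, hZ0, hgood⟩ := hZ
  refine ⟨Z, hZB, hgood, ?_, le_antisymm (cr_mono_left G hZB) (hr₀ ▸ cr_mono_left G hZ0)⟩
  by_contra hsmall
  have hsmall' : Z.card ≤ p * s := not_lt.1 hsmall
  set S := B ∪ Z with hS
  -- the largest tight set
  obtain ⟨T, hT, hTmax⟩ := Finset.exists_max_image
    (Z.powerset.filter fun T => T.card = p * cutrank G T (S \ T)) Finset.card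
    ⟨∅, by
      have : cutrank G ∅ (S \ ∅) = 0 := Nat.le_zero.1 (by simpa using cr_card G ∅ (S \ ∅))
      simp only [Finset.mem_filter, Finset.mem_powerset, this]; simp⟩
  simp only [Finset.mem_filter, Finset.mem_powerset] at hT hTmax
  obtain ⟨hTZ, hTt⟩ := hT
  have hclos : ∀ v ∈ Sᶜ, cutrank G (insert v T) (S \ T) ≤ cutrank G T (S \ T) := by
    intro v hv
    have hvS : v ∉ S := by simpa using hv
    have hvB : v ∉ B := fun h => hvS (Finset.mem_union_left _ h)
    have hvZ : v ∉ Z := fun h => hvS (Finset.mem_union_right _ h)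
    have hnot : ¬ HangsOn G p B (insert v Z) := by
      intro hg
      have h1 := hmax (insert v Z) ⟨Finset.insert_subset (by simpa using hvB) hZB,
        hZ0.trans (Finset.subset_insert _ _), hg⟩
      rw [Finset.card_insert_of_notMem hvZ] at h1
      omega
    unfold HangsOn at hnot
    push Not at hnot
    obtain ⟨X, hX, hXc⟩ := hnot
    have hvX : v ∈ X := by
      by_contra hvX
      have hXZ : X ⊆ Z := (Finset.subset_insert_iff_of_notMem hvX).1 hX
      have h1 := hgood X hXZ
      have h2 : cutrank G X ((B ∪ Z) \ X) ≤ cutrank G X ((B ∪ insert v Z) \ X) :=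
        cr_mono G subset_rfl (by grind)
      have h3 := Nat.mul_le_mul_left p h2
      omega
    obtain ⟨U, hU, hvU⟩ : ∃ U, X = insert v U ∧ v ∉ U :=
      ⟨X.erase v, (Finset.insert_erase hvX).symm, Finset.notMem_erase _ _⟩
    subst hU
    have hUZ : U ⊆ Z := by
      intro x hx
      have := hX (Finset.mem_insert_of_mem hx)
      grind
    have e1 : (B ∪ insert v Z) \ insert v U = S \ U := by
      rw [hS]; ext x; grind
    rw [e1, Finset.card_insert_of_notMem hvU] at hXc
    have h1 := hgood U hUZ
    rw [← hS] at h1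
    have h2 : cutrank G U (S \ U) ≤ cutrank G (insert v U) (S \ U) :=
      cr_mono_left G (Finset.subset_insert _ _)
    have h3 := Nat.mul_le_mul_left p h2
    have hUt : U.card = p * cutrank G U (S \ U) := by omega
    have hUe : cutrank G (insert v U) (S \ U) = cutrank G U (S \ U) :=
      Nat.eq_of_mul_eq_mul_left hp (by omega)
    -- `U ⊆ T`
    have hUT : U ⊆ T := by
      have hsm := cr_submod G T (S \ T) U (S \ U)
      have q1 : (S \ T) ∪ (S \ U) = S \ (T ∩ U) := by clear * -; grind
      have q2 : (S \ T) ∩ (S \ U) = S \ (T ∪ U) := by clear * -; grind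
      rw [q1, q2] at hsm
      have g1 := hgood (T ∩ U) (Finset.inter_subset_left.trans hTZ)
      have g2 := hgood (T ∪ U) (Finset.union_subset hTZ hUZ)
      rw [← hS] at g1 g2
      have g3 := Finset.card_union_add_card_inter T U
      have g4 := Nat.mul_le_mul_left p hsm
      rw [Nat.mul_add, Nat.mul_add] at g4
      have g5 := hTmax (T ∪ U) ⟨Finset.union_subset hTZ hUZ, by omega⟩
      have g6 := Finset.eq_of_subset_of_card_le (Finset.subset_union_left (s₁ := T) (s₂ := U)) g5
      rw [g6]; exact Finset.subset_union_right
    have hsm := cr_submod G (insert v U) (S \ U) T (S \ T)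
    have hvT : v ∉ T := fun h => hvZ (hTZ h)
    have e2 : insert v U ∩ T = U := by clear * - hvT hUT; grind
    have e3 : insert v U ∪ T = insert v T := by clear * - hUT; grind
    have e4 : (S \ U) ∪ (S \ T) = S \ U := by clear * - hUT; grind
    have e5 : (S \ U) ∩ (S \ T) = S \ T := by clear * - hUT; grind
    rw [e2, e3, e4, e5] at hsm
    omega
  have hcl := cr_closure G T Sᶜ (S \ T) hclos
  have e6 : (S \ T)ᶜ = T ∪ Sᶜ := by
    have : T ⊆ S := hTZ.trans Finset.subset_union_right
    ext x; simp only [Finset.mem_compl, Finset.mem_union, Finset.mem_sdiff]; grind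
  rw [← e6, cr_symm] at hcl
  have hBsub : B ⊆ S \ T := by
    intro b hb
    have : b ∉ T := fun h => by have := hZB (hTZ h); simp at this; exact this hb
    grind
  have hle : cutrank G T (S \ T) ≤ s := by
    have h1 := Finset.card_le_card hTZ
    exact Nat.le_of_mul_le_mul_left (by omega : p * cutrank G T (S \ T) ≤ p * s) hp
  have h2 := hs (S \ T) hBsub (hcl.trans hle)
  have h3 := Finset.card_le_card (Finset.sdiff_subset (s := S) (t := T))
  have h4 := Finset.card_union_le B Z
  rw [← hS] at h4
  omega

theorem core_final (G : SimpleGraph V) (r : ℕ) (B Z X Y : Finset V) (p : ℕ) (hp : 1 ≤ p)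
    (hZB : Z ⊆ Bᶜ) (hZ : HangsOn G p B Z) (hz : p * (12 * r) < Z.card)
    (hZr : cutrank G Z B = cutrank G Bᶜ B) (hzb : 8 * B.card ≤ Z.card)
    (hu : X ∪ Y = B ∪ Z) (hd : Disjoint X Y) (hX : (B ∪ Z).card ≤ 3 * X.card)
    (hc : cutrank G X Y < r)
    (hmin : (Y ∩ B).card < B.card →
      cutrank G B Bᶜ < cutrank G (Y ∩ B) (Y ∩ B)ᶜ) : False := by
  have hdis : Disjoint B Z := by
    rw [Finset.disjoint_left]; intro b hb hbz; have := hZB hbz; simp at this; exact this hb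
  have hd' := Finset.disjoint_left.1 hd
  have hdis' := Finset.disjoint_left.1 hdis
  have memu : ∀ x, (x ∈ X ∨ x ∈ Y) ↔ (x ∈ B ∨ x ∈ Z) := by
    intro x; rw [← Finset.mem_union, ← Finset.mem_union, hu]
  have hXc : X.card ≤ (X ∩ Z).card + B.card := by
    have h1 := Finset.card_le_card (show X ⊆ (X ∩ Z) ∪ B by intro x hx; grind)
    exact h1.trans (Finset.card_union_le _ _)
  rw [Finset.card_union_of_disjoint hdis] at hX
  have hXZ : p * (3 * r) < (X ∩ Z).card := by nlinarith
  have hlam := hZ (X ∩ Z) Finset.inter_subset_right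
  have hlam' : 3 * r < cutrank G (X ∩ Z) ((B ∪ Z) \ (X ∩ Z)) :=
    Nat.lt_of_mul_lt_mul_left (lt_of_lt_of_le hXZ hlam)
  have e1 : (B ∪ Z) \ (X ∩ Z) = Y ∪ (X ∩ B) := by
    ext x; have := memu x; have := @hd' x; have := @hdis' x
    simp only [Finset.mem_sdiff, Finset.mem_union, Finset.mem_inter]; tauto
  rw [e1] at hlam'
  have h1 := cr_union_right G (X ∩ Z) Y (X ∩ B)
  have h2 : cutrank G (X ∩ Z) Y ≤ cutrank G X Y := cr_mono_left G Finset.inter_subset_left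
  have h3 : 2 * r < cutrank G (X ∩ Z) (X ∩ B) := by omega
  have hne : (X ∩ B).Nonempty := by
    rw [← Finset.card_pos]
    have := cr_card G (X ∩ B) (X ∩ Z)
    rw [cr_symm] at this
    omega
  have hlt : (Y ∩ B).card < B.card := by
    apply Finset.card_lt_card
    refine ⟨Finset.inter_subset_right, fun h => ?_⟩
    obtain ⟨x, hx⟩ := hne
    rw [Finset.mem_inter] at hx
    exact hd' hx.1 (Finset.mem_inter.1 (h hx.2)).1
  have h4 := hmin hlt
  have e2 : (Y ∩ B)ᶜ = (X ∩ B) ∪ Bᶜ := by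
    ext x; have := memu x; have := @hd' x
    simp only [Finset.mem_compl, Finset.mem_union, Finset.mem_inter]; tauto
  have h5 := cr_submod G (Y ∩ B) ((X ∩ B) ∪ Z) B Bᶜ
  have e3 : Y ∩ B ∩ B = Y ∩ B := by grind
  have e4 : Y ∩ B ∪ B = B := by grind
  have e5 : (X ∩ B) ∪ Z ∪ Bᶜ = (X ∩ B) ∪ Bᶜ := by
    rw [Finset.union_assoc, Finset.union_eq_right.2 hZB]
  have e6 : ((X ∩ B) ∪ Z) ∩ Bᶜ = Z := by
    ext x; have := @hZB x
    simp only [Finset.mem_compl, Finset.mem_union, Finset.mem_inter] at *; tauto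
  rw [e3, e4, e5, e6, ← e2, cr_symm G B Z, hZr, cr_symm G Bᶜ B] at h5
  have e7 : (X ∩ B) ∪ Z ⊆ X ∪ (Y ∩ Z) := by
    intro x; have := memu x
    simp only [Finset.mem_union, Finset.mem_inter]; tauto
  have h6 : cutrank G (Y ∩ B) ((X ∩ B) ∪ Z) ≤ cutrank G (Y ∩ B) (X ∪ (Y ∩ Z)) :=
    cr_mono G subset_rfl e7
  have h7 := cr_union_right G (Y ∩ B) X (Y ∩ Z)
  have h8 : cutrank G (Y ∩ B) X ≤ cutrank G X Y := by
    rw [cr_symm]; exact cr_mono G subset_rfl Finset.inter_subset_left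
  have h9 := cr_tri G (X ∩ Z) (Y ∩ Z) (X ∩ B) (Y ∩ B)
  have h10 : cutrank G ((X ∩ Z) ∪ (Y ∩ Z)) ((X ∩ B) ∪ (Y ∩ B)) ≤ cutrank G Bᶜ B :=
    cr_mono G (by intro x; have := @hZB x; grind) (by grind)
  rw [cr_symm G Bᶜ B] at h10
  have h11 : cutrank G (X ∩ Z) (Y ∩ B) ≤ cutrank G X Y :=
    cr_mono G Finset.inter_subset_left Finset.inter_subset_left
  rw [cr_symm G (Y ∩ Z)] at h9
  omega

theorem core_contra (G : SimpleGraph V) (r : ℕ) (hr : 1 ≤ r) (W : Finset V)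
    (hWc : 57 * r ≤ W.card)
    (hW : ∀ Z : Finset V, (W ∩ Z).card ≤ cutrank G Z Zᶜ ∨ (W \ Z).card ≤ cutrank G Z Zᶜ)
    (hbal : ∀ S : Finset V, 2 ≤ S.card →
      ∃ X Y, IsBalancedPartitionOf S X Y ∧ cutrank G X Y < r) : False := by
  have huniv : ∀ t, (Finset.univ : Finset V) ∈ (Finset.univ : Finset (Finset V)).filter
      fun B => (W \ B).card < 19 * r ∧ cutrank G B Bᶜ ≤ t := by
    intro t
    simp only [Finset.mem_filter, Finset.mem_univ, true_and]
    have h0 := cr_card G ((Finset.univ : Finset V)ᶜ) Finset.univ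
    rw [cr_symm, Finset.compl_univ, Finset.card_empty] at h0
    refine ⟨?_, ?_⟩
    · rw [Finset.sdiff_eq_empty_iff_subset.2 (Finset.subset_univ _), Finset.card_empty]; omega
    · rw [Finset.compl_univ]; omega
  have hminex : ∀ t, ∃ B : Finset V, ((W \ B).card < 19 * r ∧ cutrank G B Bᶜ ≤ t) ∧
      ∀ B' : Finset V, (W \ B').card < 19 * r → cutrank G B' B'ᶜ ≤ t → B.card ≤ B'.card := by
    intro t
    obtain ⟨B, hB, hm⟩ := Finset.exists_min_image _ Finset.card ⟨_, huniv t⟩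
    simp only [Finset.mem_filter, Finset.mem_univ, true_and] at hB hm
    exact ⟨B, hB, fun B' h1 h2 => hm B' ⟨h1, h2⟩⟩
  obtain ⟨B₀, ⟨hB₀, hf₀⟩, hm₀⟩ := hminex (12 * r)
  obtain ⟨B, ⟨hB, hf⟩, hm⟩ := hminex (18 * r)
  have hstep := core_step G r hr W hWc hW hbal
  obtain ⟨C1, a1, b1, c1⟩ := hstep _ (by omega) B₀ hB₀ hf₀
  obtain ⟨C2, a2, b2, c2⟩ := hstep _ (by omega) C1 a1 b1
  obtain ⟨C3, a3, b3, c3⟩ := hstep _ (by omega) C2 a2 b2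
  obtain ⟨C4, a4, b4, c4⟩ := hstep _ (by omega) C3 a3 b3
  obtain ⟨C5, a5, b5, c5⟩ := hstep _ (by omega) C4 a4 b4
  obtain ⟨C6, a6, b6, c6⟩ := hstep _ (by omega) C5 a5 b5
  have c7 := hm C6 a6 (by omega)
  have hBpos : 2 ≤ B.card := by
    have := Finset.card_le_card (show W ⊆ B ∪ (W \ B) by clear * -; grind)
    have := Finset.card_union_le B (W \ B)
    omega
  have hsize : 11 * B.card < B₀.card := by omega
  have hfB : 12 * r < cutrank G B Bᶜ := by
    by_contra h
    have := hm₀ B hB (by omega)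
    omega
  have hbr : 12 * r < B.card := lt_of_lt_of_le hfB (cr_card _ _ _)
  obtain ⟨p, hp1, hp2, hp3⟩ : ∃ p, 1 ≤ p ∧ 8 * B.card ≤ p * (12 * r) ∧
      p * (12 * r) ≤ 9 * B.card := by
    refine ⟨8 * B.card / (12 * r) + 1, Nat.succ_le_succ (Nat.zero_le _), ?_, ?_⟩
    · have := Nat.lt_div_mul_add (a := 8 * B.card) (b := 12 * r) (by omega)
      generalize 8 * B.card / (12 * r) = q at *
      rw [Nat.add_mul]
      generalize q * (12 * r) = m at *
      clear hstep hW hm hm₀ hminex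
      omega
    · have := Nat.div_mul_le_self (8 * B.card) (12 * r)
      generalize 8 * B.card / (12 * r) = q at *
      rw [Nat.add_mul]
      generalize q * (12 * r) = m at *
      clear hstep hW hm hm₀ hminex
      omega
  obtain ⟨Z, hZB, hZ, hz, hZr⟩ := core_grow G B p (12 * r) hp1 (by
    intro B' hBB' hf'
    have h1 : (W \ B').card ≤ (W \ B).card := Finset.card_le_card (Finset.sdiff_subset_sdiff subset_rfl hBB')
    have := hm₀ B' (by omega) hf'
    omega)
  obtain ⟨X, Y, ⟨hu, hd, hX, hY⟩, hc⟩ := hbal (B ∪ Z)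
    (hBpos.trans (Finset.card_le_card Finset.subset_union_left))
  have hcard := Finset.card_union_of_disjoint hd
  rw [hu] at hcard
  have hmin : ∀ Q : Finset V, (W \ (Q ∩ B)).card < 19 * r → (Q ∩ B).card < B.card →
      cutrank G B Bᶜ < cutrank G (Q ∩ B) (Q ∩ B)ᶜ := by
    intro Q h1 h2
    by_contra h3
    have := hm (Q ∩ B) h1 (by omega)
    omega
  have hXY : X ∩ B ∪ Y ∩ B = B := by
    rw [← Finset.union_inter_distrib_right, hu]; exact Finset.inter_eq_right.2 Finset.subset_union_left
  rcases core_split G r W hWc hW B (X ∩ B) (Y ∩ B) hB hf hXY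
    (hd.mono Finset.inter_subset_left Finset.inter_subset_left)
    (lt_of_le_of_lt (cr_mono G Finset.inter_subset_left Finset.inter_subset_left) hc)
    with ⟨h1, _⟩ | ⟨h1, _⟩
  · exact core_final G r B Z Y X p hp1 hZB hZ hz hZr (by omega) (by rw [Finset.union_comm, hu])
      hd.symm (by omega) (by rw [cr_symm]; exact hc) (hmin X h1)
  · exact core_final G r B Z X Y p hp1 hZB hZ hz hZr (by omega) hu
      hd (by omega) hc (hmin Y h1)

end Core

section Family

variable {V : Type*} [Fintype V]

theorem fam_split (G : SimpleGraph V) (M : ℕ) (hM : 1 ≤ M)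
    (hno : ∀ W : Finset V, W.card = M → ∃ Z : Finset V,
      cutrank G Z Zᶜ < (W ∩ Z).card ∧ cutrank G Z Zᶜ < (W \ Z).card)
    (P : Finset V) (hP : 2 ≤ P.card) (hf : cutrank G P Pᶜ ≤ M) :
    ∃ P₁ P₂ : Finset V, P₁.Nonempty ∧ P₂.Nonempty ∧ Disjoint P₁ P₂ ∧ P₁ ∪ P₂ = P ∧
      cutrank G P₁ P₁ᶜ ≤ M ∧ cutrank G P₂ P₂ᶜ ≤ M := by
  rcases Nat.lt_or_ge (cutrank G P Pᶜ) M with hlt | hge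
  · obtain ⟨v, hv⟩ : P.Nonempty := Finset.card_pos.1 (by omega)
    refine ⟨{v}, P \ {v}, Finset.singleton_nonempty v, ?_, Finset.disjoint_sdiff, ?_, ?_, ?_⟩
    · rw [← Finset.card_pos, Finset.card_sdiff_of_subset (by simpa using hv)]
      simp; omega
    · exact Finset.union_sdiff_of_subset (by simpa using hv)
    · exact (cr_card _ _ _).trans (by simpa using hM)
    · have e : (P \ {v})ᶜ = Pᶜ ∪ {v} := by
        ext x; simp only [Finset.mem_compl, Finset.mem_sdiff, Finset.mem_union,
          Finset.mem_singleton]; tauto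
      rw [e]
      have h1 := cr_union_right G (P \ {v}) Pᶜ {v}
      have h2 : cutrank G (P \ {v}) Pᶜ ≤ cutrank G P Pᶜ := cr_mono_left G Finset.sdiff_subset
      have h3 := cr_card G {v} (P \ {v})
      rw [cr_symm, Finset.card_singleton] at h3
      omega
  · have hM' : cutrank G P Pᶜ = M := le_antisymm hf hge
    obtain ⟨W, hWP, hW1, hW2⟩ := cr_basis G Pᶜ P
    rw [cr_symm G Pᶜ P, hM'] at hW2
    obtain ⟨Z, hZ1, hZ2⟩ := hno W (by omega)
    have key : ∀ Q : Finset V, cutrank G Q Qᶜ < (W \ Q).card → cutrank G (P ∩ Q) (P ∩ Q)ᶜ <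
        cutrank G P Pᶜ + cutrank G Q Qᶜ - cutrank G Q Qᶜ := by
      intro Q hQ
      have h1 := cr_submod G P Pᶜ Q Qᶜ
      rw [← Finset.compl_inter] at h1
      have h2 : cutrank G P (W \ Q) ≤ cutrank G (P ∪ Q) (Pᶜ ∩ Qᶜ) :=
        cr_mono G Finset.subset_union_left (by
          intro x hx
          rw [Finset.mem_sdiff] at hx
          exact Finset.mem_inter.2 ⟨hWP hx.1, by simpa using hx.2⟩)
      have h3 := cr_union_left G (W \ Q) (W ∩ Q) P
      rw [Finset.sdiff_union_inter] at h3
      have h4 := cr_card G (W ∩ Q) P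
      have h5 := Finset.card_sdiff_add_card_inter W Q
      rw [cr_symm G P] at h2
      omega
    have k1 := key Z hZ2
    have k2 := key Zᶜ (by
      have : W \ Zᶜ = W ∩ Z := by ext x; simp
      rw [this, compl_compl, cr_symm]; exact hZ1)
    have ne1 : (P ∩ Z) ∪ (P ∩ Zᶜ) = P := by
      rw [← Finset.inter_union_distrib_left, Finset.union_compl, Finset.inter_univ]
    refine ⟨P ∩ Z, P ∩ Zᶜ, ?_, ?_, ?_, ne1, by omega, by omega⟩
    · rw [Finset.nonempty_iff_ne_empty]
      intro h
      rw [h, Finset.empty_union] at ne1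
      rw [ne1] at k2
      omega
    · rw [Finset.nonempty_iff_ne_empty]
      intro h
      rw [h, Finset.union_empty] at ne1
      rw [ne1] at k1
      omega
    · exact disjoint_compl_right.mono Finset.inter_subset_right Finset.inter_subset_right

/-- a binary laminar family with top `P` and all members of cutrank at most `M` -/
structure BinFam (G : SimpleGraph V) (M : ℕ) (P : Finset V) (F : Finset (Finset V)) : Prop where
  top : P ∈ F
  sub : ∀ X ∈ F, X ⊆ P
  ne : ∀ X ∈ F, X.Nonempty
  wid : ∀ X ∈ F, cutrank G X Xᶜ ≤ M
  sing : ∀ v ∈ P, {v} ∈ F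
  lam : ∀ X ∈ F, ∀ Y ∈ F, X ⊆ Y ∨ Y ⊆ X ∨ Disjoint X Y
  split : ∀ X ∈ F, 2 ≤ X.card → ∃ L ∈ F, ∃ R ∈ F, L ⊂ X ∧ R ⊂ X ∧ Disjoint L R ∧
    ∀ Y ∈ F, Y ⊂ X → Y ⊆ L ∨ Y ⊆ R

theorem fam_exists (G : SimpleGraph V) (M : ℕ) (hM : 1 ≤ M)
    (hno : ∀ W : Finset V, W.card = M → ∃ Z : Finset V,
      cutrank G Z Zᶜ < (W ∩ Z).card ∧ cutrank G Z Zᶜ < (W \ Z).card)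
    (P : Finset V) (hne : P.Nonempty) (hf : cutrank G P Pᶜ ≤ M) :
    ∃ F, BinFam G M P F := by
  induction P using Finset.strongInduction with
  | H P ih =>
    rcases Nat.lt_or_ge P.card 2 with hc | hc
    · have h1 : P.card = 1 := by have := Finset.card_pos.2 hne; omega
      obtain ⟨v, rfl⟩ := Finset.card_eq_one.1 h1
      refine ⟨{{v}}, by simp, by simp, by simp, by simpa using hf, by simp, by simp, ?_⟩
      intro X hX h2
      rw [Finset.mem_singleton] at hX
      subst hX
      simp at h2
    · obtain ⟨P₁, P₂, n1, n2, hd, hu, f1, f2⟩ := fam_split G M hM hno P hc hf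
      have hd' := Finset.disjoint_left.1 hd
      have s1 : P₁ ⊂ P := by
        refine ⟨hu ▸ Finset.subset_union_left, fun h => ?_⟩
        obtain ⟨x, hx⟩ := n2
        exact hd' (h (hu ▸ Finset.mem_union_right _ hx)) hx
      have s2 : P₂ ⊂ P := by
        refine ⟨hu ▸ Finset.subset_union_right, fun h => ?_⟩
        obtain ⟨x, hx⟩ := n1
        exact hd' hx (h (hu ▸ Finset.mem_union_left _ hx))
      obtain ⟨F₁, h1⟩ := ih P₁ s1 n1 f1
      obtain ⟨F₂, h2⟩ := ih P₂ s2 n2 f2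
      have mem : ∀ X, X ∈ insert P (F₁ ∪ F₂) ↔ X = P ∨ X ∈ F₁ ∨ X ∈ F₂ := by
        intro X; rw [Finset.mem_insert, Finset.mem_union]
      have hsub : ∀ X ∈ insert P (F₁ ∪ F₂), X ⊆ P := by
        intro X hX
        rcases (mem X).1 hX with rfl | h | h
        · exact subset_rfl
        · exact (h1.sub X h).trans s1.1
        · exact (h2.sub X h).trans s2.1
      refine ⟨insert P (F₁ ∪ F₂), Finset.mem_insert_self _ _, hsub, ?_, ?_, ?_, ?_, ?_⟩
      · intro X hX
        rcases (mem X).1 hX with rfl | h | h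
        · exact hne
        · exact h1.ne X h
        · exact h2.ne X h
      · intro X hX
        rcases (mem X).1 hX with rfl | h | h
        · exact hf
        · exact h1.wid X h
        · exact h2.wid X h
      · intro v hv
        rw [← hu, Finset.mem_union] at hv
        rw [mem]
        rcases hv with hv | hv
        · exact Or.inr (Or.inl (h1.sing v hv))
        · exact Or.inr (Or.inr (h2.sing v hv))
      · intro X hX Y hY
        rcases (mem X).1 hX with rfl | hX' | hX'
        · exact Or.inr (Or.inl (hsub Y hY))
        · rcases (mem Y).1 hY with rfl | hY' | hY'
          · exact Or.inl (hsub X hX)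
          · exact h1.lam X hX' Y hY'
          · exact Or.inr (Or.inr (hd.mono (h1.sub X hX') (h2.sub Y hY')))
        · rcases (mem Y).1 hY with rfl | hY' | hY'
          · exact Or.inl (hsub X hX)
          · exact Or.inr (Or.inr (hd.symm.mono (h2.sub X hX') (h1.sub Y hY')))
          · exact h2.lam X hX' Y hY'
      · intro X hX hXc
        rcases (mem X).1 hX with rfl | hX' | hX'
        · refine ⟨P₁, (mem _).2 (Or.inr (Or.inl h1.top)), P₂, (mem _).2 (Or.inr (Or.inr h2.top)),
            s1, s2, hd, ?_⟩
          intro Y hY hYX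
          rcases (mem Y).1 hY with rfl | hY' | hY'
          · exact absurd hYX (ssubset_irrefl _)
          · exact Or.inl (h1.sub Y hY')
          · exact Or.inr (h2.sub Y hY')
        · obtain ⟨L, hL, R, hR, a, b, c, d⟩ := h1.split X hX' hXc
          refine ⟨L, (mem _).2 (Or.inr (Or.inl hL)), R, (mem _).2 (Or.inr (Or.inl hR)), a, b, c, ?_⟩
          intro Y hY hYX
          rcases (mem Y).1 hY with rfl | hY' | hY'
          · exact absurd (hYX.trans_subset (h1.sub X hX')) (fun h => h.2 s1.1)
          · exact d Y hY' hYX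
          · exfalso
            obtain ⟨y, hy⟩ := h2.ne Y hY'
            exact hd' (h1.sub X hX' (hYX.1 hy)) (h2.sub Y hY' hy)
        · obtain ⟨L, hL, R, hR, a, b, c, d⟩ := h2.split X hX' hXc
          refine ⟨L, (mem _).2 (Or.inr (Or.inr hL)), R, (mem _).2 (Or.inr (Or.inr hR)), a, b, c, ?_⟩
          intro Y hY hYX
          rcases (mem Y).1 hY with rfl | hY' | hY'
          · exact absurd (hYX.trans_subset (h2.sub X hX')) (fun h => h.2 s2.1)
          · exfalso
            obtain ⟨y, hy⟩ := h1.ne Y hY'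
            exact hd' (h1.sub Y hY' hy) (h2.sub X hX' (hYX.1 hy))
          · exact d Y hY' hYX

end Family

section TreeOfFamily

variable {V : Type*} {n : ℕ}

/-- covering relation in an indexed family -/
def FCov (s : Fin n → Finset V) (i j : Fin n) : Prop :=
  s i ⊂ s j ∧ ∀ k, s i ⊂ s k → ¬ s k ⊂ s j

/-- the Hasse diagram of an indexed family -/
def FTree (s : Fin n → Finset V) : SimpleGraph (Fin n) where
  Adj i j := FCov s i j ∨ FCov s j i
  symm := ⟨fun _ _ h => h.symm⟩
  loopless := ⟨fun _ h => by rcases h with h | h <;> exact (ssubset_irrefl _) h.1⟩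

theorem fcov_exists (s : Fin n → Finset V) {i j : Fin n} (h : s i ⊂ s j) :
    ∃ k, FCov s i k ∧ s k ⊆ s j := by
  obtain ⟨k, hk, hmin⟩ := Finset.exists_min_image
    (Finset.univ.filter fun k => s i ⊂ s k ∧ s k ⊆ s j) (fun k => (s k).card)
    ⟨j, by simp [h]⟩
  simp only [Finset.mem_filter, Finset.mem_univ, true_and] at hk hmin
  refine ⟨k, ⟨hk.1, fun l h1 h2 => ?_⟩, hk.2⟩
  have := hmin l ⟨h1, h2.1.trans hk.2⟩
  have := Finset.card_lt_card h2
  omega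

theorem fcov_unique (s : Fin n → Finset V) (hinj : Function.Injective s)
    (hne : ∀ i, (s i).Nonempty)
    (hlam : ∀ i j, s i ⊆ s j ∨ s j ⊆ s i ∨ Disjoint (s i) (s j))
    {i j k : Fin n} (hj : FCov s i j) (hk : FCov s i k) : j = k := by
  apply hinj
  rcases hlam j k with h | h | h
  · by_contra hn
    exact hk.2 j hj.1 (h.ssubset_of_ne hn)
  · by_contra hn
    exact hj.2 k hk.1 (h.ssubset_of_ne (Ne.symm hn))
  · obtain ⟨x, hx⟩ := hne i
    exact absurd (hk.1.1 hx) (Finset.disjoint_left.1 h (hj.1.1 hx))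

theorem fclimb (s : Fin n → Finset V) (hinj : Function.Injective s) (H : SimpleGraph (Fin n))
    (m : ℕ) (i j : Fin n) (hm : (s j).card - (s i).card ≤ m)
    (hH : ∀ k l, s i ⊆ s k → s l ⊆ s j → FCov s k l → H.Adj k l) (hij : s i ⊆ s j) :
    H.Reachable i j := by
  induction m generalizing i with
  | zero =>
    have := hinj (Finset.eq_of_subset_of_card_le hij (by omega))
    rw [this]
  | succ m ih =>
    by_cases he : s i = s j
    · rw [hinj he]
    · obtain ⟨k, hk, hkj⟩ := fcov_exists s (hij.ssubset_of_ne he)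
      have hlt := Finset.card_lt_card hk.1
      have h1 := hH i k subset_rfl hkj hk
      exact h1.reachable.trans (ih k (by omega)
        (fun a b ha hb hc => hH a b (hk.1.1.trans ha) hb hc) hkj)

theorem fside (s : Fin n → Finset V) (hinj : Function.Injective s)
    (hne : ∀ i, (s i).Nonempty)
    (hlam : ∀ i j, s i ⊆ s j ∨ s j ⊆ s i ∨ Disjoint (s i) (s j))
    (t : Fin n) (htop : ∀ i, s i ⊆ s t) {a b : Fin n} (hab : FCov s a b) (i : Fin n) :
    (((FTree s).deleteEdges {s(a, b)}).Reachable i a ↔ s i ⊆ s a) ∧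
    (((FTree s).deleteEdges {s(a, b)}).Reachable i b ↔ ¬ s i ⊆ s a) := by
  set H := (FTree s).deleteEdges {s(a, b)} with hH
  have hba : ¬ FCov s b a := fun h => h.1.2 hab.1.1
  have hadj : ∀ k l, FCov s k l → ¬ (k = a ∧ l = b) → H.Adj k l := by
    intro k l hkl hne'
    rw [hH, SimpleGraph.deleteEdges_adj]
    refine ⟨Or.inl hkl, ?_⟩
    rw [Set.mem_singleton_iff, Sym2.eq_iff]
    rintro (h | ⟨rfl, rfl⟩)
    · exact hne' h
    · exact hba hkl
  have hstep : ∀ k l, H.Adj k l → s k ⊆ s a → s l ⊆ s a := by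
    intro k l hkl hka
    rw [hH, SimpleGraph.deleteEdges_adj, Set.mem_singleton_iff] at hkl
    obtain ⟨h1, h2⟩ := hkl
    rcases h1 with h1 | h1
    · by_cases hka' : s k = s a
      · have hk := hinj hka'
        subst hk
        have := fcov_unique s hinj hne hlam h1 hab
        subst this
        exact absurd rfl h2
      · rcases hlam l a with h | h | h
        · exact h
        · by_cases he : s a = s l
          · rw [he]
          · exact absurd (h.ssubset_of_ne he) (h1.2 a (hka.ssubset_of_ne hka'))
        · obtain ⟨x, hx⟩ := hne k
          exact absurd (hka hx) (Finset.disjoint_left.1 h (h1.1.1 hx))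
    · exact h1.1.1.trans hka
  have hinv : ∀ k l, H.Reachable k l → s k ⊆ s a → s l ⊆ s a := by
    rintro k l ⟨w⟩
    induction w with
    | nil => exact id
    | cons h _ ih => exact fun hk => ih (hstep _ _ h hk)
  have hup : ∀ k, ¬ s k ⊆ s a → H.Reachable k t := by
    intro k hk
    refine fclimb s hinj H _ k t le_rfl (fun x y hx _ hxy => hadj x y hxy ?_) (htop k)
    rintro ⟨rfl, -⟩
    exact hk hx
  have hb : ¬ s b ⊆ s a := hab.1.2
  refine ⟨⟨fun h => hinv _ _ h.symm subset_rfl, fun h => ?_⟩, ⟨fun h h' => hb (hinv _ _ h h'),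
    fun h => (hup i h).trans (hup b hb).symm⟩⟩
  refine fclimb s hinj H _ i a le_rfl (fun x y _ hy hxy => hadj x y hxy ?_) h
  rintro ⟨-, rfl⟩
  exact hb hy

theorem ftree_isTree (s : Fin n → Finset V) (hinj : Function.Injective s)
    (hne : ∀ i, (s i).Nonempty)
    (hlam : ∀ i j, s i ⊆ s j ∨ s j ⊆ s i ∨ Disjoint (s i) (s j))
    (t : Fin n) (htop : ∀ i, s i ⊆ s t) : (FTree s).IsTree := by
  have hup : ∀ k, (FTree s).Reachable k t := fun k =>
    fclimb s hinj _ _ k t le_rfl (fun x y _ _ hxy => Or.inl hxy) (htop k)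
  refine ⟨?_, ?_⟩
  · haveI : Nonempty (Fin n) := ⟨t⟩
    exact ⟨fun u v => (hup u).trans (hup v).symm⟩
  · rw [SimpleGraph.isAcyclic_iff_forall_adj_isBridge]
    have key : ∀ a b, FCov s a b → (FTree s).IsBridge s(a, b) := by
      intro a b hab
      rw [SimpleGraph.isBridge_iff]
      intro h
      exact ((fside s hinj hne hlam t htop hab a).2.1 h) subset_rfl
    intro v w h
    rcases h with h | h
    · exact key _ _ h
    · rw [Sym2.eq_swap]; exact key _ _ h

end TreeOfFamily

section Decomp

variable {V : Type*} [Fintype V]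

theorem decomp_of_fam (G : SimpleGraph V) (M : ℕ) (hV : 2 ≤ Fintype.card V)
    (F : Finset (Finset V)) (hF : BinFam G M Finset.univ F) :
    ∃ d : RankDecomp V, RankDecomp.widthLE G d M := by
  obtain ⟨n, s, hinj, hmem, hsurj⟩ : ∃ (n : ℕ) (s : Fin n → Finset V), Function.Injective s ∧
      (∀ i, s i ∈ F) ∧ ∀ X ∈ F, ∃ i, s i = X :=
    ⟨F.card, fun i => (F.equivFin.symm i).1,
      fun i j h => F.equivFin.symm.injective (Subtype.ext h), fun i => (F.equivFin.symm i).2,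
      fun X hX => ⟨F.equivFin ⟨X, hX⟩, by simp⟩⟩
  have hne : ∀ i, (s i).Nonempty := fun i => hF.ne _ (hmem i)
  have hlam : ∀ i j, s i ⊆ s j ∨ s j ⊆ s i ∨ Disjoint (s i) (s j) :=
    fun i j => hF.lam _ (hmem i) _ (hmem j)
  obtain ⟨t, ht⟩ := hsurj _ hF.top
  have htop : ∀ i, s i ⊆ s t := fun i => by rw [ht]; exact Finset.subset_univ _
  choose leaf hleaf using fun v : V => hsurj {v} (hF.sing v (Finset.mem_univ v))
  have hkids : ∀ i, 2 ≤ (s i).card → ∃ l r, l ≠ r ∧ FCov s l i ∧ FCov s r i ∧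
      ∀ j, FCov s j i → j = l ∨ j = r := by
    intro i hi
    obtain ⟨L, hL, R, hR, a, b, c, d⟩ := hF.split _ (hmem i) hi
    obtain ⟨l, rfl⟩ := hsurj L hL
    obtain ⟨r, rfl⟩ := hsurj R hR
    have hdis : ∀ x y : Fin n, Disjoint (s x) (s y) → ¬ s x ⊆ s y := by
      intro x y h h'
      obtain ⟨z, hz⟩ := hne x
      exact Finset.disjoint_left.1 h hz (h' hz)
    refine ⟨l, r, ?_, ⟨a, ?_⟩, ⟨b, ?_⟩, ?_⟩
    · rintro rfl; exact hdis _ _ c subset_rfl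
    · intro k h1 h2
      rcases d _ (hmem k) h2 with h | h
      · exact h1.2 h
      · exact hdis _ _ c (h1.1.trans h)
    · intro k h1 h2
      rcases d _ (hmem k) h2 with h | h
      · exact hdis _ _ c.symm (h1.1.trans h)
      · exact h1.2 h
    · intro j hj
      rcases d _ (hmem j) hj.1 with h | h
      · left; by_contra hn
        exact hj.2 l (h.ssubset_of_ne (fun e => hn (hinj e))) a
      · right; by_contra hn
        exact hj.2 r (h.ssubset_of_ne (fun e => hn (hinj e))) b
  have hnokids : ∀ i j, (s i).card < 2 → ¬ FCov s j i := by
    intro i j hi hj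
    have := Finset.card_lt_card hj.1
    have := Finset.card_pos.2 (hne j)
    omega
  have hsub : ∀ i, (FTree s).degree i ≤ 3 := by
    intro i
    have h1 : (FTree s).neighborFinset i ⊆
        (Finset.univ.filter fun j => FCov s i j) ∪ (Finset.univ.filter fun j => FCov s j i) := by
      intro j hj
      rw [SimpleGraph.mem_neighborFinset] at hj
      simp only [Finset.mem_union, Finset.mem_filter, Finset.mem_univ, true_and]
      exact hj
    have h2 : (Finset.univ.filter fun j => FCov s i j).card ≤ 1 := by
      rw [Finset.card_le_one]
      intro a ha b hb
      simp only [Finset.mem_filter, Finset.mem_univ, true_and] at ha hb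
      exact fcov_unique s hinj hne hlam ha hb
    have h3 : (Finset.univ.filter fun j => FCov s j i).card ≤ 2 := by
      rcases Nat.lt_or_ge (s i).card 2 with hc | hc
      · rw [Finset.filter_false_of_mem (fun j _ => hnokids i j hc)]
        simp
      · obtain ⟨l, r, -, -, -, h⟩ := hkids i hc
        have : (Finset.univ.filter fun j => FCov s j i) ⊆ {l, r} := by
          intro j hj
          simp only [Finset.mem_filter, Finset.mem_univ, true_and] at hj
          simpa using h j hj
        exact (Finset.card_le_card this).trans Finset.card_le_two
    have h4 := (Finset.card_le_card h1).trans (Finset.card_union_le _ _)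
    rw [SimpleGraph.card_neighborFinset_eq_degree] at h4
    omega
  let d : RankDecomp V :=
    { n := n
      tree := FTree s
      isTree := ftree_isTree s hinj hne hlam t htop
      subcubic := hsub
      leaf := leaf
      leafDeg := by
        intro v
        rw [SimpleGraph.degree_eq_one_iff_existsUnique_adj]
        have hlt : s (leaf v) ⊂ s t := by
          refine ⟨htop _, fun h => ?_⟩
          have := Finset.card_le_card h
          rw [ht, hleaf, Finset.card_univ, Finset.card_singleton] at this
          omega
        obtain ⟨k, hk, -⟩ := fcov_exists s hlt
        refine ⟨k, Or.inl hk, ?_⟩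
        rintro j (hj | hj)
        · exact fcov_unique s hinj hne hlam hj hk
        · exact absurd hj (hnokids _ _ (by rw [hleaf, Finset.card_singleton]; omega))
      leafInj := by
        intro v w h
        have := hleaf v
        rw [h, hleaf w] at this
        exact (Finset.singleton_injective this).symm
      leafSurj := by
        intro i hi
        rw [SimpleGraph.degree_eq_one_iff_existsUnique_adj] at hi
        rcases Nat.lt_or_ge (s i).card 2 with hc | hc
        · have := Finset.card_pos.2 (hne i)
          obtain ⟨v, hv⟩ := Finset.card_eq_one.1 (show (s i).card = 1 by omega)
          exact ⟨v, hinj (by rw [hleaf, hv])⟩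
        · obtain ⟨l, r, hlr, h1, h2, -⟩ := hkids i hc
          exact absurd (hi.unique (Or.inr h1) (Or.inr h2)) hlr }
  have hside : ∀ a b, FCov s a b → d.side a b = s a ∧ d.side b a = (s a)ᶜ := by
    intro a b hab
    constructor
    · ext x
      have := (fside s hinj hne hlam t htop hab (leaf x)).1
      rw [hleaf, Finset.singleton_subset_iff] at this
      simp only [RankDecomp.side, Finset.mem_filter, Finset.mem_univ, true_and]
      exact this
    · ext x
      have := (fside s hinj hne hlam t htop hab (leaf x)).2
      rw [hleaf, Finset.singleton_subset_iff] at this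
      simp only [RankDecomp.side, Finset.mem_filter, Finset.mem_univ, true_and, Finset.mem_compl]
      rw [Sym2.eq_swap]
      exact this
  refine ⟨d, ?_⟩
  intro a b hab
  rcases (hab : FCov s a b ∨ FCov s b a) with h | h
  · rw [(hside a b h).1, (hside a b h).2]
    exact hF.wid _ (hmem a)
  · rw [(hside b a h).1, (hside b a h).2, cr_symm]
    exact hF.wid _ (hmem b)

end Decomp

/-- If `rankwidth(G) ≥ 72r` with `r ≥ 1`, then `G` has an induced subgraph `H = G[S]`
with `min-bal-cutrank(H) ≥ r`. -/
theorem rankwidth_ge_implies_induced_min_bal_cutrank_ge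
    {V : Type*} [Fintype V] (G : SimpleGraph V) (r : ℕ) (hr : 1 ≤ r)
    (hrw : 72 * r ≤ rankwidth G) :
    ∃ S : Finset V, r ≤ minBalCutrank G S := by
  have hex : ∃ d : RankDecomp V, RankDecomp.widthLE G d (Fintype.card V) := by
    by_contra hno
    have : {k | ∃ d : RankDecomp V, RankDecomp.widthLE G d k} = ∅ := by
      rw [Set.eq_empty_iff_forall_notMem]
      rintro k ⟨d, -⟩
      exact hno ⟨d, fun u v _ => (cr_card G _ _).trans (Finset.card_le_univ _)⟩
    unfold rankwidth at hrw
    rw [this, Nat.sInf_empty] at hrw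
    omega
  have hV : 72 * r ≤ Fintype.card V := hrw.trans (Nat.sInf_le hex)
  by_contra hcon
  push Not at hcon
  have hbal : ∀ S : Finset V, 2 ≤ S.card →
      ∃ X Y, IsBalancedPartitionOf S X Y ∧ cutrank G X Y < r := by
    intro S hS
    have hne : {k | ∃ X Y : Finset V, IsBalancedPartitionOf S X Y ∧ cutrank G X Y = k}.Nonempty := by
      obtain ⟨X, hX, hXc⟩ := Finset.exists_subset_card_eq (show S.card / 2 ≤ S.card by omega)
      refine ⟨_, X, S \ X, ⟨Finset.union_sdiff_of_subset hX, Finset.disjoint_sdiff, by omega, ?_⟩, rfl⟩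
      rw [Finset.card_sdiff_of_subset hX, hXc]
      omega
    obtain ⟨X, Y, h1, h2⟩ := Nat.sInf_mem hne
    refine ⟨X, Y, h1, ?_⟩
    rw [h2]
    exact hcon S
  have hno : ∀ W : Finset V, W.card = 72 * r - 1 → ∃ Z : Finset V,
      cutrank G Z Zᶜ < (W ∩ Z).card ∧ cutrank G Z Zᶜ < (W \ Z).card := by
    intro W hWc
    by_contra hW
    push Not at hW
    refine core_contra G r hr W (by omega) (fun Z => ?_) hbal
    rcases Nat.lt_or_ge (cutrank G Z Zᶜ) (W ∩ Z).card with h | h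
    · exact Or.inr (hW Z h)
    · exact Or.inl h
  have h0 : cutrank G Finset.univ (Finset.univ : Finset V)ᶜ ≤ 72 * r - 1 := by
    rw [cr_symm, Finset.compl_univ]
    exact (cr_card _ _ _).trans (by simp)
  have hVne : (Finset.univ : Finset V).Nonempty := by
    rw [← Finset.card_pos, Finset.card_univ]; omega
  obtain ⟨F, hF⟩ := fam_exists G (72 * r - 1) (by omega) hno Finset.univ hVne h0
  have hdec := decomp_of_fam G (72 * r - 1) (by omega) F hF
  have h1 : rankwidth G ≤ 72 * r - 1 := Nat.sInf_le hdec
  omega
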